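/- arXiv:0801.0679 — 3 statements merged into one kernel-verified Lean document; each statement's English description precedes it below -/
import Mathlib

section
/- Assume the board 𝔖 has no isolated point, and let g ∈ 𝓕(𝔖,ℤ). Then g belongs to V(𝔖,ℤ) if and only if its reduction modulo 2, the function g̃ : 𝔖 → 𝔽₂ given by g̃(P) = g(P) mod 2, belongs to V(𝔖,𝔽₂). -/
def dirs : Finset (ℤ × ℤ) := {(1,0), (-1,0), (0,1), (0,-1)}

def chi (X : ℤ × ℤ) : (ℤ × ℤ) → ℤ := fun Y => if Y = X then 1 else 0

def chiSet (I : Finset (ℤ × ℤ)) : (ℤ × ℤ) → ℤ := fun P => if P ∈ I then 1 else 0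

def IsMove (S : Finset (ℤ × ℤ)) (g : (ℤ × ℤ) → ℤ) : Prop :=
  ∃ P d : ℤ × ℤ, d ∈ dirs ∧ P ∈ S ∧ P + d ∈ S ∧ P + d + d ∈ S ∧
    g = chi P + chi (P + d) - chi (P + d + d)

def IsMiddle (S : Finset (ℤ × ℤ)) (Q : ℤ × ℤ) : Prop :=
  ∃ P d : ℤ × ℤ, d ∈ dirs ∧ P ∈ S ∧ P + d ∈ S ∧ P + d + d ∈ S ∧ Q = P + d

def Neighbor (S : Finset (ℤ × ℤ)) (A B : ℤ × ℤ) : Prop :=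
  ∃ d ∈ dirs, A ∈ S ∧ A + d ∈ S ∧ A + d + d ∈ S ∧ B = A + d + d

def NoIsolatedPoint (S : Finset (ℤ × ℤ)) : Prop :=
  ∀ P ∈ S, ∃ Q, Relation.EqvGen (Neighbor S) P Q ∧ IsMiddle S Q

def IsResourceCount (S : Finset (ℤ × ℤ)) (π : (ℤ × ℤ) → ℝ) : Prop :=
  ∀ P d : ℤ × ℤ, d ∈ dirs → P ∈ S → P + d ∈ S → P + d + d ∈ S →
    π (P + d + d) ≤ π P + π (P + d)

def LegalMove (S I : Finset (ℤ × ℤ)) (g : (ℤ × ℤ) → ℤ) (I' : Finset (ℤ × ℤ)) : Prop :=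
  ∃ P d : ℤ × ℤ, d ∈ dirs ∧ P ∈ S ∧ P + d ∈ S ∧ P + d + d ∈ S ∧
    g = chi P + chi (P + d) - chi (P + d + d) ∧
    P ∈ I ∧ P + d ∈ I ∧ P + d + d ∉ I ∧
    I' = (I \ {P, P + d}) ∪ {P + d + d}

def Transforms (S : Finset (ℤ × ℤ)) :
    List ((ℤ × ℤ) → ℤ) → Finset (ℤ × ℤ) → Finset (ℤ × ℤ) → Prop
  | [], I, J => I = J
  | g :: L, I, J => ∃ I', LegalMove S I g I' ∧ Transforms S L I' J

def boxProd (g₁ g₂ : (ℤ × ℤ) → ℤ) : Sym2 (ℤ × ℤ) → ℤ :=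
  Sym2.lift ⟨fun A B => if A = B then g₁ A * g₂ A else g₁ A * g₂ B + g₁ B * g₂ A, by
    intro A B
    by_cases h : A = B
    · subst h; rfl
    · simp only [if_neg h, if_neg (Ne.symm h)]; ring⟩

def moveAbs (g : (ℤ × ℤ) → ℤ) : (ℤ × ℤ) → ℤ := fun A => |g A|

def IsQMove (S : Finset (ℤ × ℤ)) (c : Sym2 (ℤ × ℤ) → ℤ) : Prop :=
  (∃ A g, A ∈ S ∧ IsMove S g ∧ g A = 0 ∧ c = boxProd (fun B => 2 * chi A B) g) ∨
  (∃ g, IsMove S g ∧ c = boxProd (moveAbs g) g)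

def StepList (S : Finset (ℤ × ℤ)) :
    List (Finset (ℤ × ℤ)) → List ((ℤ × ℤ) → ℤ) → Prop
  | [_], [] => True
  | I :: I' :: Ps, g :: L => LegalMove S I g I' ∧ StepList S (I' :: Ps) L
  | _, _ => False

def pOfSeq (A : ℤ × ℤ) : List (Finset (ℤ × ℤ)) → List ((ℤ × ℤ) → ℤ) → ℕ
  | I :: Ps, g :: L => (if g A ≠ 0 then 1 else if A ∈ I then 1 else 0) + pOfSeq A Ps L
  | _, _ => 0

def bothCount (A A' : ℤ × ℤ) : List ((ℤ × ℤ) → ℤ) → ℕ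
  | [] => 0
  | g :: L => (if g A ≠ 0 ∧ g A' ≠ 0 then 1 else 0) + bothCount A A' L

noncomputable def pagoda (P : ℤ × ℤ) : ℝ := ((Real.sqrt 5 - 1) / 2) ^ (P.1.natAbs + P.2.natAbs)

theorem neg_mem_dirs {d : ℤ × ℤ} (hd : d ∈ dirs) : -d ∈ dirs := by
  revert d
  decide

theorem isMove_reverse {S : Finset (ℤ × ℤ)} {P d : ℤ × ℤ} (hd : d ∈ dirs) (hP : P ∈ S)
    (hQ : P + d ∈ S) (hR : P + d + d ∈ S) :
    IsMove S (chi (P + d + d) + chi (P + d) - chi P) := by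
  have h : P + d + d + -d = P + d := by abel
  have h' : P + d + -d = P := by abel
  refine ⟨P + d + d, -d, neg_mem_dirs hd, hR, ?_, ?_, ?_⟩
  · rwa [h]
  · rwa [h, h']
  · rw [h, h']

theorem two_smul_chi_middle_mem {S : Finset (ℤ × ℤ)} {Q : ℤ × ℤ} (hQ : IsMiddle S Q) :
    (2 : ℤ) • chi Q ∈ Submodule.span ℤ {f | IsMove S f} := by
  obtain ⟨P, d, hd, hP, hM, hR, rfl⟩ := hQ
  have h := add_mem
    (Submodule.subset_span (R := ℤ) (s := {f | IsMove S f}) ⟨P, d, hd, hP, hM, hR, rfl⟩)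
    (Submodule.subset_span (isMove_reverse hd hP hM hR))
  convert h using 1
  module

theorem two_smul_chi_sub_mem {S : Finset (ℤ × ℤ)} {A B : ℤ × ℤ} (h : Neighbor S A B) :
    (2 : ℤ) • chi A - (2 : ℤ) • chi B ∈ Submodule.span ℤ {f | IsMove S f} := by
  obtain ⟨d, hd, hP, hM, hR, rfl⟩ := h
  have h := sub_mem
    (Submodule.subset_span (R := ℤ) (s := {f | IsMove S f}) ⟨A, d, hd, hP, hM, hR, rfl⟩)
    (Submodule.subset_span (isMove_reverse hd hP hM hR))
  convert h using 1
  module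

theorem two_smul_chi_sub_mem_of_eqvGen {S : Finset (ℤ × ℤ)} {A B : ℤ × ℤ}
    (h : Relation.EqvGen (Neighbor S) A B) :
    (2 : ℤ) • chi A - (2 : ℤ) • chi B ∈ Submodule.span ℤ {f | IsMove S f} := by
  induction h with
  | rel A B h => exact two_smul_chi_sub_mem h
  | refl A => simp
  | symm A B _ ih => simpa using neg_mem ih
  | trans A B C _ _ ih ih' => simpa using add_mem ih ih'

theorem two_smul_chi_mem {S : Finset (ℤ × ℤ)} (hS : NoIsolatedPoint S) {P : ℤ × ℤ}
    (hP : P ∈ S) : (2 : ℤ) • chi P ∈ Submodule.span ℤ {f | IsMove S f} := by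
  obtain ⟨Q, hPQ, hQ⟩ := hS P hP
  simpa using add_mem (two_smul_chi_sub_mem_of_eqvGen hPQ) (two_smul_chi_middle_mem hQ)

/-- Every even function supported on a board with no isolated point lies in `V(S,ℤ)`. -/
theorem mem_span_of_even {S : Finset (ℤ × ℤ)} (hS : NoIsolatedPoint S) {g : ℤ × ℤ → ℤ}
    (hsupp : ∀ P, P ∉ S → g P = 0) (heven : ∀ P, (2 : ℤ) ∣ g P) :
    g ∈ Submodule.span ℤ {f | IsMove S f} := by
  choose k hk using heven
  have hg : g = ∑ P ∈ S, k P • ((2 : ℤ) • chi P) := by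
    ext X
    by_cases hX : X ∈ S
    · simp [Finset.sum_apply, chi, hX, hk X, mul_comm]
    · simp [Finset.sum_apply, chi, hX, hsupp X hX]
  rw [hg]
  exact Submodule.sum_mem _ fun P hP => Submodule.smul_mem _ _ (two_smul_chi_mem hS hP)

theorem eq_zero_of_mem_span {S : Finset (ℤ × ℤ)} {f : ℤ × ℤ → ℤ}
    (hf : f ∈ Submodule.span ℤ {f | IsMove S f}) {X : ℤ × ℤ} (hX : X ∉ S) : f X = 0 := by
  induction hf using Submodule.span_induction with
  | mem f hf =>
    obtain ⟨P, d, -, hP, hQ, hR, rfl⟩ := hf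
    have hne {Y : ℤ × ℤ} (hY : Y ∈ S) : chi Y X = 0 :=
      if_neg fun h : X = Y => hX (h ▸ hY)
    simp [hne hP, hne hQ, hne hR]
  | zero => rfl
  | add f f' _ _ ih ih' => simp [ih, ih']
  | smul n f _ ih => simp [ih]

theorem cast_mem_span {s : Set (ℤ × ℤ → ℤ)} {g : ℤ × ℤ → ℤ} (hg : g ∈ Submodule.span ℤ s) :
    (fun P => (g P : ZMod 2)) ∈
      Submodule.span (ZMod 2) ((fun (f : ℤ × ℤ → ℤ) (P : ℤ × ℤ) => (f P : ZMod 2)) '' s) := by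
  induction hg using Submodule.span_induction with
  | mem f hf => exact Submodule.subset_span ⟨f, hf, rfl⟩
  | zero =>
    convert Submodule.zero_mem _
    simp
  | add f f' _ _ ih ih' =>
    convert add_mem ih ih' using 1
    ext P
    simp
  | smul n f _ ih =>
    convert Submodule.smul_mem _ (n : ZMod 2) ih using 1
    ext P
    simp

theorem exists_lift_of_mem_span {s : Set (ℤ × ℤ → ℤ)} {h : ℤ × ℤ → ZMod 2}
    (hh : h ∈
      Submodule.span (ZMod 2) ((fun (f : ℤ × ℤ → ℤ) (P : ℤ × ℤ) => (f P : ZMod 2)) '' s)) :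
    ∃ f ∈ Submodule.span ℤ s, ∀ P, (f P : ZMod 2) = h P := by
  induction hh using Submodule.span_induction with
  | mem h hh =>
    obtain ⟨f, hf, rfl⟩ := hh
    exact ⟨f, Submodule.subset_span hf, fun _ => rfl⟩
  | zero => exact ⟨0, zero_mem _, by simp⟩
  | add h h' _ _ ih ih' =>
    obtain ⟨f, hf, hfh⟩ := ih
    obtain ⟨f', hf', hfh'⟩ := ih'
    exact ⟨f + f', add_mem hf hf', by simp [hfh, hfh']⟩
  | smul c h _ ih =>
    obtain ⟨f, hf, hfh⟩ := ih
    obtain ⟨n, rfl⟩ := ZMod.intCast_surjective c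
    exact ⟨n • f, Submodule.smul_mem _ n hf, by simp [hfh]⟩

/-- For a board with no isolated point, a function `g : S → ℤ` lies in `V(S,ℤ)`
iff its reduction mod 2 lies in `V(S,𝔽₂)`. -/
theorem mem_span_iff_mod_two (S : Finset (ℤ × ℤ)) (hS : NoIsolatedPoint S)
    (g : (ℤ × ℤ) → ℤ) (hsupp : ∀ P, P ∉ S → g P = 0) :
    g ∈ Submodule.span ℤ {f | IsMove S f} ↔
      (fun P => (g P : ZMod 2)) ∈
        Submodule.span (ZMod 2)
          ((fun (f : (ℤ × ℤ) → ℤ) (P : ℤ × ℤ) => (f P : ZMod 2)) '' {f | IsMove S f}) := by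
  refine ⟨cast_mem_span, fun hg => ?_⟩
  obtain ⟨f, hf, hfg⟩ := exists_lift_of_mem_span hg
  have h : g - f ∈ Submodule.span ℤ {f | IsMove S f} := by
    refine mem_span_of_even hS (fun P hP => ?_) fun P => ?_
    · simp [hsupp P hP, eq_zero_of_mem_span hf hP]
    · exact (ZMod.intCast_zmod_eq_zero_iff_dvd _ 2).1 (by simp [hfg])
  simpa using add_mem h hf
end

section
/- Assume one can go from the position I to the position J in legal moves. Then there exist nonnegative integers x(g) for g ∈ 𝒟(𝔖) and y_g(A) for g ∈ 𝒟(𝔖), A ∈ 𝔖 with g(A) = 0, such that: (i) χ_I⊠χ_I − χ_J⊠χ_J = Σ_g x(g)·(|g|⊠g) + Σ_g Σ_A y_g(A)·(2χ_A⊠g); (ii) the flatness constraints 0 ≤ y_g(A) ≤ x(g) hold for all g and A; and (iii) for every A ∈ 𝔖, 0 ≤ Σ_g y_g(A) + Σ_{g : g(A)≠0} x(g) ≤ |I| − |J|. -/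
/-- `boxProd` evaluated on an unordered pair. -/
lemma boxProd_mk (f g : (ℤ × ℤ) → ℤ) (A B : ℤ × ℤ) :
    boxProd f g s(A, B) = if A = B then f A * g A else f A * g B + f B * g A := rfl

/-- `boxProd` as a linear map in its first argument. -/
def boxProdLeft (g : (ℤ × ℤ) → ℤ) : ((ℤ × ℤ) → ℤ) →ₗ[ℤ] (Sym2 (ℤ × ℤ) → ℤ) where
  toFun f := boxProd f g
  map_add' f f' := by
    ext p
    induction p with | _ A B
    simp only [Pi.add_apply, boxProd_mk]
    split_ifs <;> ring
  map_smul' c f := by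
    ext p
    induction p with | _ A B
    simp only [Pi.smul_apply, smul_eq_mul, boxProd_mk, RingHom.id_apply]
    split_ifs <;> ring

/-- Difference of squares for the symmetric bilinear product `boxProd`. -/
lemma boxProd_self_sub_boxProd_self (f g : (ℤ × ℤ) → ℤ) :
    boxProd f f - boxProd (f - g) (f - g) = boxProd (fun B => 2 * f B - g B) g := by
  ext p
  induction p with | _ A B
  simp only [Pi.sub_apply, boxProd_mk]
  split_ifs <;> ring

lemma sum_smul_two_mul_chi (T : Finset (ℤ × ℤ)) (c : (ℤ × ℤ) → ℤ) :
    ∑ A ∈ T, c A • (fun B => 2 * chi A B) = fun B => if B ∈ T then 2 * c B else 0 := by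
  ext B
  simp [chi, mul_comm]

lemma ne_zero_of_mem_dirs {d : ℤ × ℤ} (hd : d ∈ dirs) : d ≠ 0 := by
  rintro rfl
  revert hd
  decide

namespace LegalMove

variable {S I I' : Finset (ℤ × ℤ)} {g : (ℤ × ℤ) → ℤ}

lemma isMove (h : LegalMove S I g I') : IsMove S g := by
  obtain ⟨P, d, hd, hP, hQ, hR, hg, -⟩ := h
  exact ⟨P, d, hd, hP, hQ, hR, hg⟩

lemma subset (h : LegalMove S I g I') (hI : I ⊆ S) : I' ⊆ S := by
  obtain ⟨P, d, -, -, -, hR, -, -, -, -, rfl⟩ := h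
  exact Finset.union_subset (Finset.sdiff_subset.trans hI) (by simpa using hR)

lemma card_eq (h : LegalMove S I g I') : I.card = I'.card + 1 := by
  obtain ⟨P, d, hd, -, -, -, -, hP, hQ, hR, rfl⟩ := h
  have hsub : ({P, P + d} : Finset (ℤ × ℤ)) ⊆ I := by
    simp [Finset.insert_subset_iff, hP, hQ]
  have hcard : ({P, P + d} : Finset (ℤ × ℤ)).card = 2 :=
    Finset.card_pair (by simpa using (ne_zero_of_mem_dirs hd))
  have hle := Finset.card_le_card hsub
  rw [Finset.card_union_of_disjoint (by simp [hR]), Finset.card_sdiff_of_subset hsub,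
    Finset.card_singleton]
  omega

lemma chiSet_eq (h : LegalMove S I g I') : chiSet I' = chiSet I - g := by
  obtain ⟨P, d, hd, -, -, -, rfl, hP, hQ, hR, rfl⟩ := h
  have h₁ : P ≠ P + d := by simpa using (ne_zero_of_mem_dirs hd)
  ext B
  simp only [chiSet, chi, Pi.sub_apply, Pi.add_apply, Finset.mem_union, Finset.mem_sdiff,
    Finset.mem_insert, Finset.mem_singleton]
  grind

/-- For a legal move `g` from `I`, the function `2χ_I - g` is `1` on the support of `g`. -/
lemma two_mul_chiSet_sub (h : LegalMove S I g I') (hI : I ⊆ S) (B : ℤ × ℤ) :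
    2 * chiSet I B - g B =
      moveAbs g B + if B ∈ S.filter (fun A => g A = 0) then 2 * chiSet I B else 0 := by
  obtain ⟨P, d, hd, -, -, -, rfl, hP, hQ, hR, -⟩ := h
  have h₁ : P ≠ P + d := by simpa using (ne_zero_of_mem_dirs hd)
  have hB := @hI B
  simp only [chiSet, moveAbs, chi, Pi.sub_apply, Pi.add_apply]
  by_cases hBP : B = P
  · grind
  · by_cases hBQ : B = P + d
    · grind
    · by_cases hBR : B = P + d + d <;> grind

/-- The quadratic decomposition of a single legal move. -/
lemma boxProd_sub_boxProd (h : LegalMove S I g I') (hI : I ⊆ S) :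
    boxProd (chiSet I) (chiSet I) - boxProd (chiSet I') (chiSet I') =
      boxProd (moveAbs g) g + ∑ A ∈ S.filter (fun A => g A = 0),
        chiSet I A • boxProd (fun B => 2 * chi A B) g := by
  have hsum : ∑ A ∈ S.filter (fun A => g A = 0), chiSet I A • boxProd (fun B => 2 * chi A B) g =
      boxProdLeft g (∑ A ∈ S.filter (fun A => g A = 0),
        chiSet I A • (fun B => 2 * chi A B)) := by
    rw [map_sum]
    simp only [map_smul]
    rfl
  rw [hsum, h.chiSet_eq, boxProd_self_sub_boxProd_self, funext (h.two_mul_chiSet_sub hI),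
    sum_smul_two_mul_chi]
  exact (boxProdLeft g).map_add _ _

end LegalMove

/-- If one can go from `I` to `J` in legal moves then there are nonnegative
integers `x(g)` and `y_g(A)` realising the quadratic decomposition, satisfying
the flatness constraints `y_g(A) ≤ x(g)` and the fundamental inequality
`Σ_g y_g(A) + Σ_{g(A)≠0} x(g) ≤ |I| − |J|` for every `A ∈ S`. -/
theorem quadratic_with_flatness (S I J : Finset (ℤ × ℤ)) (hI : I ⊆ S)
    (D : Finset ((ℤ × ℤ) → ℤ)) (hD : ∀ g, g ∈ D ↔ IsMove S g)
    (L : List ((ℤ × ℤ) → ℤ)) (h : Transforms S L I J) :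
    ∃ (x : ((ℤ × ℤ) → ℤ) → ℕ) (y : ((ℤ × ℤ) → ℤ) → (ℤ × ℤ) → ℕ),
      boxProd (chiSet I) (chiSet I) - boxProd (chiSet J) (chiSet J) =
          (∑ g ∈ D, ((x g : ℤ) • boxProd (moveAbs g) g +
            ∑ A ∈ S.filter (fun A => g A = 0),
              (y g A : ℤ) • boxProd (fun B => 2 * chi A B) g)) ∧
        (∀ g ∈ D, ∀ A ∈ S, g A = 0 → y g A ≤ x g) ∧
        (∀ A ∈ S, ((∑ g ∈ D, y g A : ℕ) : ℤ) +
            (∑ g ∈ D.filter (fun g => g A ≠ 0), (x g : ℤ))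
          ≤ (I.card : ℤ) - (J.card : ℤ)) := by
  classical
  induction L generalizing I with
  | nil =>
    obtain rfl : I = J := h
    exact ⟨0, 0, by simp, by simp, by simp⟩
  | cons g₀ L ih =>
    obtain ⟨I', hmove, hrest⟩ := h
    obtain ⟨x, y, hxy, hflat, hbound⟩ := ih I' (hmove.subset hI) hrest
    have hg₀ : g₀ ∈ D := (hD g₀).2 hmove.isMove
    refine ⟨fun g => x g + if g = g₀ then 1 else 0,
      fun g A => y g A + if g = g₀ then (if A ∈ I ∧ g₀ A = 0 then 1 else 0) else 0, ?_, ?_, ?_⟩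
    · rw [← sub_add_sub_cancel _ (boxProd (chiSet I') (chiSet I')), hxy,
        hmove.boxProd_sub_boxProd hI, ← Finset.sum_ite_eq_of_mem' D g₀ (fun g =>
          boxProd (moveAbs g) g + ∑ A ∈ S.filter (fun A => g A = 0),
            chiSet I A • boxProd (fun B => 2 * chi A B) g) hg₀, ← Finset.sum_add_distrib]
      refine Finset.sum_congr rfl fun g _ => ?_
      by_cases hg : g = g₀
      · subst hg
        have hsplit : ∀ A ∈ S.filter (fun A => g A = 0),
            ((y g A + if A ∈ I ∧ g A = 0 then 1 else 0 : ℕ) : ℤ) •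
                boxProd (fun B => 2 * chi A B) g =
              (y g A : ℤ) • boxProd (fun B => 2 * chi A B) g +
                chiSet I A • boxProd (fun B => 2 * chi A B) g := by
          intro A hA
          simp [chiSet, (Finset.mem_filter.1 hA).2, add_smul]
        simp only [if_true]
        rw [Finset.sum_congr rfl hsplit, Finset.sum_add_distrib]
        push_cast
        rw [add_smul, one_smul]
        abel
      · simp [hg]
    · intro g hg A hA hgA
      have := hflat g hg A hA hgA
      dsimp only
      split_ifs <;> omega
    · intro A hA
      have := hbound A hA
      have hcard := hmove.card_eq
      push_cast at this ⊢
      simp only [Finset.sum_add_distrib, Finset.sum_ite_eq', Finset.mem_filter, hg₀, true_and,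
        if_true]
      split_ifs <;> grind
end

section
/- (Leibniz) If the sequence of legal moves g₁, g₂, …, g_k transforms the position I into the position J, then the reversed sequence g_k, …, g₂, g₁ is a sequence of legal moves transforming the complementary position 𝔖 \ J into 𝔖 \ I. -/
theorem add_self_ne_of_mem_dirs {P d : ℤ × ℤ} (hd : d ∈ dirs) :
    P ≠ P + d + d ∧ P + d ≠ P + d + d := by
  obtain ⟨a, b⟩ := P
  simp only [dirs, Finset.mem_insert, Finset.mem_singleton] at hd
  rcases hd with rfl | rfl | rfl | rfl <;>
    simp only [ne_eq, Prod.mk_add_mk, Prod.mk.injEq] <;> omega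

theorem LegalMove.subset_s16 {S I I' : Finset (ℤ × ℤ)} {g : (ℤ × ℤ) → ℤ}
    (h : LegalMove S I g I') (hI : I ⊆ S) : I' ⊆ S := by
  obtain ⟨P, d, -, -, -, hR, -, -, -, -, rfl⟩ := h
  exact Finset.union_subset (Finset.sdiff_subset.trans hI) (Finset.singleton_subset_iff.2 hR)

/-- A legal move from `I` to `I'` is legal from the complement of `I'` to that of `I`. -/
theorem LegalMove.compl {S I I' : Finset (ℤ × ℤ)} {g : (ℤ × ℤ) → ℤ}
    (h : LegalMove S I g I') : LegalMove S (S \ I') g (S \ I) := by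
  obtain ⟨P, d, hd, hP, hQ, hR, hg, hPI, hQI, hRI, rfl⟩ := h
  obtain ⟨hPR, hQR⟩ := add_self_ne_of_mem_dirs (P := P) hd
  refine ⟨P, d, hd, hP, hQ, hR, hg, ?_, ?_, ?_, ?_⟩
  · simp only [Finset.mem_sdiff, Finset.mem_union, Finset.mem_insert, Finset.mem_singleton]
    tauto
  · simp only [Finset.mem_sdiff, Finset.mem_union, Finset.mem_insert, Finset.mem_singleton]
    tauto
  · simp only [Finset.mem_sdiff, Finset.mem_union, Finset.mem_insert, Finset.mem_singleton]
    tauto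
  · generalize P + d + d = R at *
    generalize P + d = Q at *
    ext X
    simp only [Finset.mem_sdiff, Finset.mem_union, Finset.mem_insert, Finset.mem_singleton]
    grind

theorem Transforms.append_singleton {S J K : Finset (ℤ × ℤ)} {g : (ℤ × ℤ) → ℤ}
    (hg : LegalMove S J g K) : ∀ {L : List ((ℤ × ℤ) → ℤ)} {I : Finset (ℤ × ℤ)},
    Transforms S L I J → Transforms S (L ++ [g]) I K
  | [], _, h => by
    obtain rfl : _ = J := h
    exact ⟨K, hg, rfl⟩
  | _ :: _, _, ⟨I', hI', h⟩ => ⟨I', hI', Transforms.append_singleton hg h⟩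

/-- Leibniz: if the sequence of legal moves `L` transforms `I` into `J`, then the
reversed sequence transforms `S \\ J` into `S \\ I`. -/
theorem leibniz_reversal (S I J : Finset (ℤ × ℤ)) (hI : I ⊆ S)
    (L : List ((ℤ × ℤ) → ℤ)) (h : Transforms S L I J) :
    Transforms S L.reverse (S \ J) (S \ I) := by
  induction L generalizing I with
  | nil =>
    obtain rfl : I = J := h
    exact rfl
  | cons g L ih =>
    obtain ⟨I', hg, h⟩ := h
    rw [List.reverse_cons]
    exact Transforms.append_singleton hg.compl (ih I' (hg.subset_s16 hI) h)
end
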